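/- Let q ∈ (0,1), c > 0, and for t > 0 set Θ_t = (1-q)/(e^{ct} - q). Then for all t, s > 0 the two Chapman–Kolmogorov consistency equations hold: (i) [1 - q(1-Θ_s)(1-Θ_t)] / ([1-q(1-Θ_t)][1-q(1-Θ_s)]) = 1/(1 - q(1-Θ_{t+s})), and (ii) [1 - Θ_s Θ_t - q(1-Θ_t)(1-Θ_s)] / ([1-q(1-Θ_t)][1-q(1-Θ_s)]) = (1-Θ_{t+s})/(1 - q(1-Θ_{t+s})). -/

import Mathlib

/-!
Put `x = e^{ct}`, `φ = 1 - Θ_t`, `A = 1 / (1 - qφ)` and `B = φ / (1 - qφ)`. The left-hand sides of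
the two equations are the coefficients of the product `(A + B j)(A' + B' j)` in the algebra with
`(j + 1)(j + q) = 0`. The two characters `j ↦ -1` and `j ↦ -q` send `A + B j` to `A - B = x⁻¹` and
`A - qB = 1`, both multiplicative in `x`, so the product is the element belonging to
`e^{ct} e^{cs} = e^{c(t+s)}`. Solving for the coefficients gives `A = (1 - q x⁻¹) / (1 - q)` and
`B = (1 - x⁻¹) / (1 - q)`.
-/

section Field

variable {K : Type*} [Field K] {q x y : K}

/-- The dependence parameter `Θ_t`, as a function of the multiplicative time `x = e^{ct}`. -/
def dependenceParameter (q x : K) : K :=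
  (1 - q) / (x - q)

lemma one_sub_dependenceParameter (hxq : x ≠ q) :
    1 - dependenceParameter q x = (x - 1) / (x - q) := by
  rw [dependenceParameter, one_sub_div (sub_ne_zero.mpr hxq), sub_sub_sub_cancel_right]

lemma one_sub_mul_one_sub_dependenceParameter (hxq : x ≠ q) :
    1 - q * (1 - dependenceParameter q x) = (1 - q) * x / (x - q) := by
  rw [one_sub_dependenceParameter hxq, ← mul_div_assoc, one_sub_div (sub_ne_zero.mpr hxq)]
  ring

lemma one_div_one_sub_mul_one_sub_dependenceParameter (hx : x ≠ 0) (hxq : x ≠ q) :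
    1 / (1 - q * (1 - dependenceParameter q x)) = (1 - q * x⁻¹) / (1 - q) := by
  rw [one_sub_mul_one_sub_dependenceParameter hxq, one_div_div, mul_comm, ← div_div, sub_div,
    div_self hx, div_eq_mul_inv q]

lemma one_sub_div_one_sub_mul_one_sub_dependenceParameter (hx : x ≠ 0) (hxq : x ≠ q) :
    (1 - dependenceParameter q x) / (1 - q * (1 - dependenceParameter q x)) =
      (1 - x⁻¹) / (1 - q) := by
  rw [one_sub_mul_one_sub_dependenceParameter hxq, one_sub_dependenceParameter hxq,
    div_div_div_cancel_right₀ (sub_ne_zero.mpr hxq), mul_comm, ← div_div, sub_div, div_self hx,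
    one_div]

-- The coefficients of `1` and `j` in `(A + B j)(A' + B' j)`.
lemma one_sub_mul_mul_div_mul (q φ ψ a b : K) :
    (1 - q * ψ * φ) / (a * b) = 1 / a * (1 / b) - q * (φ / a * (ψ / b)) := by
  ring

lemma one_sub_mul_sub_mul_mul_div_mul (q θ η a b : K) :
    (1 - η * θ - q * (1 - θ) * (1 - η)) / (a * b) =
      1 / a * ((1 - η) / b) + (1 - θ) / a * (1 / b) -
        (1 + q) * ((1 - θ) / a * ((1 - η) / b)) := by
  ring

theorem theta_chapman_kolmogorov_equations_general (hq : q ≠ 1) (hx : x ≠ 0) (hy : y ≠ 0)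
    (hxq : x ≠ q) (hyq : y ≠ q) (hxyq : x * y ≠ q) :
    letI Θ : K → K := dependenceParameter q
    (1 - q * (1 - Θ y) * (1 - Θ x)) / ((1 - q * (1 - Θ x)) * (1 - q * (1 - Θ y))) =
        1 / (1 - q * (1 - Θ (x * y))) ∧
      (1 - Θ y * Θ x - q * (1 - Θ x) * (1 - Θ y)) /
          ((1 - q * (1 - Θ x)) * (1 - q * (1 - Θ y))) =
        (1 - Θ (x * y)) / (1 - q * (1 - Θ (x * y))) := by
  have hq' : 1 - q ≠ 0 := sub_ne_zero.mpr hq.symm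
  have hxy : x * y ≠ 0 := mul_ne_zero hx hy
  rw [one_sub_mul_mul_div_mul, one_sub_mul_sub_mul_mul_div_mul]
  simp only [one_div_one_sub_mul_one_sub_dependenceParameter,
    one_sub_div_one_sub_mul_one_sub_dependenceParameter, hx, hy, hxy, hxq, hyq, hxyq, ne_eq,
    not_false_eq_true]
  constructor <;> field

end Field

lemma exp_ne_of_lt_one {q v : ℝ} (hq : q < 1) (hv : 0 ≤ v) : Real.exp v ≠ q :=
  (hq.trans_le (Real.one_le_exp hv)).ne'

/-- With Θ_t = (1-q)/(e^{ct} - q), the two Chapman–Kolmogorov consistency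
    equations hold for all t, s > 0. -/
theorem theta_chapman_kolmogorov_equations
    (q c : ℝ) (hq : q ∈ Set.Ioo (0 : ℝ) 1) (hc : 0 < c)
    (t s : ℝ) (ht : 0 < t) (hs : 0 < s) :
    (letI Θ : ℝ → ℝ := fun u => (1 - q) / (Real.exp (c * u) - q)
    ((1 - q * (1 - Θ s) * (1 - Θ t)) /
        ((1 - q * (1 - Θ t)) * (1 - q * (1 - Θ s)))
      = 1 / (1 - q * (1 - Θ (t + s)))) ∧
    ((1 - Θ s * Θ t - q * (1 - Θ t) * (1 - Θ s)) /
        ((1 - q * (1 - Θ t)) * (1 - q * (1 - Θ s)))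
      = (1 - Θ (t + s)) / (1 - q * (1 - Θ (t + s))))) := by
  have hct : 0 ≤ c * t := (mul_pos hc ht).le
  have hcs : 0 ≤ c * s := (mul_pos hc hs).le
  simpa only [dependenceParameter, mul_add, Real.exp_add] using
    theta_chapman_kolmogorov_equations_general hq.2.ne (Real.exp_ne_zero _) (Real.exp_ne_zero _)
      (exp_ne_of_lt_one hq.2 hct) (exp_ne_of_lt_one hq.2 hcs)
      (Real.exp_add _ _ ▸ exp_ne_of_lt_one hq.2 (add_nonneg hct hcs))
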